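/- For all positive integers c and n, every weakly c-closed graph on n vertices has at most 3^{(c-1)/3} · n^2 maximal cliques. -/

import Mathlib

/-- `u` and `w` form a bad pair (for the value `c`) inside the subgraph of `G`
induced by `S`: they lie in `S`, are distinct and non-adjacent, and have at least
`c` common neighbors within `S`. -/
def BadPairIn {V : Type*} (c : ℕ) (G : SimpleGraph V) (S : Set V) (u w : V) : Prop :=
  u ∈ S ∧ w ∈ S ∧ u ≠ w ∧ ¬ G.Adj u w ∧
    c ≤ (G.neighborSet u ∩ G.neighborSet w ∩ S).ncard

/-- A graph is weakly `c`-closed if there is an ordering `v_1, …, v_n` of its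
vertices such that for all `i`, the vertex `v_i` is in no bad pair in the
subgraph induced by `{v_i, v_{i+1}, …, v_n}`. -/
def WeaklyCClosed {V : Type*} [Fintype V] (c : ℕ) (G : SimpleGraph V) : Prop :=
  ∃ e : Fin (Fintype.card V) ≃ V, ∀ i : Fin (Fintype.card V), ∀ w : V,
    ¬ BadPairIn c G {x : V | ∃ j : Fin (Fintype.card V), i ≤ j ∧ e j = x} (e i) w

/-- `K` is a maximal clique of `G`: a clique not properly contained in any other clique. -/
def IsMaxClique {V : Type*} (G : SimpleGraph V) (K : Set V) : Prop :=
  G.IsClique K ∧ ∀ K' : Set V, G.IsClique K' → K ⊆ K' → K = K'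

/-!
Call a vertex *good* in `S` if it lies in no bad pair inside `S`; in a weakly `c`-closed graph every
nonempty vertex set has a good vertex, namely its first one in the ordering. Delete a good vertex
`v` from `S`. A maximal clique `K` of `S` either loses `v` and stays maximal in `S \ {v}`, which
determines `K`, or `v ∈ K` and some non-neighbor `u` of `v` extends `K \ {v}`. In the latter case
`K \ {v}` is a maximal clique of the common neighborhood of `u` and `v` in `S`, which has at most
`c - 1` vertices and hence, by Moon and Moser, at most `3 ^ ((c - 1) / 3)` maximal cliques. Summing
over the deletions gives at most `1 + 3 ^ ((c - 1) / 3) * (n choose 2)` maximal cliques.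
-/

section

open Finset

variable {V : Type*} {G : SimpleGraph V} {S T K : Finset V} {u v w : V} {c : ℕ}

open Classical in
/-- The maximal cliques of the subgraph of `G` induced by the finite vertex set `S`, encoded as
finite sets of vertices of the ambient graph so that different `S` can be compared. -/
noncomputable def maximalCliquesIn (G : SimpleGraph V) (S : Finset V) : Finset (Finset V) :=
  {K ∈ S.powerset | Maximal (fun L : Finset V => L ⊆ S ∧ G.IsClique L) K}

theorem mem_maximalCliquesIn :
    K ∈ maximalCliquesIn G S ↔ Maximal (fun L : Finset V => L ⊆ S ∧ G.IsClique L) K := by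
  simpa only [maximalCliquesIn, mem_filter, mem_powerset, and_iff_right_iff_imp] using
    fun hK => hK.prop.1

theorem mem_maximalCliquesIn_iff_forall_exists_not_adj :
    K ∈ maximalCliquesIn G S ↔
      K ⊆ S ∧ G.IsClique K ∧ ∀ x ∈ S, ∃ y ∈ K, ¬ G.Adj x y := by
  classical
  rw [mem_maximalCliquesIn]
  constructor
  · intro hK
    refine ⟨hK.prop.1, hK.prop.2, fun x hxS => ?_⟩
    by_contra! hadj
    have hinsert : insert x K ⊆ S ∧ G.IsClique (insert x K : Finset V) := by
      rw [coe_insert, SimpleGraph.isClique_insert]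
      exact ⟨insert_subset hxS hK.prop.1, hK.prop.2, fun y hy _ => hadj y hy⟩
    have hxK : x ∈ K := hK.le_of_ge hinsert (subset_insert x K) (mem_insert_self x K)
    exact G.irrefl (hadj x hxK)
  · rintro ⟨hKS, hclique, hmax⟩
    refine ⟨⟨hKS, hclique⟩, fun L hL hKL x hxL => ?_⟩
    obtain ⟨y, hyK, hxy⟩ := hmax x (hL.1 hxL)
    have hxy_eq : x = y := not_imp_comm.1 (hL.2 hxL (hKL hyK)) hxy
    exact hxy_eq ▸ hyK

theorem maximalCliquesIn_empty : maximalCliquesIn G ∅ = {∅} := by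
  ext K
  simp +contextual [mem_maximalCliquesIn_iff_forall_exists_not_adj]

theorem mem_iff_forall_erase_adj_of_mem_maximalCliquesIn [DecidableEq V]
    (hK : K ∈ maximalCliquesIn G S) (hv : v ∈ S) :
    v ∈ K ↔ ∀ y ∈ K.erase v, G.Adj v y := by
  obtain ⟨-, hclique, hmax⟩ := mem_maximalCliquesIn_iff_forall_exists_not_adj.1 hK
  constructor
  · exact fun hvK y hy => hclique hvK (mem_of_mem_erase hy) (ne_of_mem_erase hy).symm
  · intro hadj
    obtain ⟨y, hyK, hvy⟩ := hmax v hv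
    by_contra hvK
    exact hvy (hadj y (mem_erase.2 ⟨ne_of_mem_of_not_mem hyK hvK, hyK⟩))

theorem erase_injOn_maximalCliquesIn [DecidableEq V] (hv : v ∈ S) :
    Set.InjOn (fun K : Finset V => K.erase v) (maximalCliquesIn G S) := by
  intro K hK L hL (herase : K.erase v = L.erase v)
  have hmem : v ∈ K ↔ v ∈ L := by
    rw [mem_iff_forall_erase_adj_of_mem_maximalCliquesIn hK hv,
      mem_iff_forall_erase_adj_of_mem_maximalCliquesIn hL hv, herase]
  by_cases hvK : v ∈ K
  · rw [← insert_erase hvK, herase, insert_erase (hmem.1 hvK)]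
  · rwa [erase_eq_of_notMem hvK, erase_eq_of_notMem (mt hmem.2 hvK)] at herase

theorem erase_mem_maximalCliquesIn [DecidableEq V] (hK : K ∈ maximalCliquesIn G S)
    (hKT : K.erase v ⊆ T) (hTS : T ⊆ S) (hadj : ∀ x ∈ T, G.Adj v x) :
    K.erase v ∈ maximalCliquesIn G T := by
  rw [mem_maximalCliquesIn_iff_forall_exists_not_adj] at hK ⊢
  obtain ⟨-, hclique, hmax⟩ := hK
  refine ⟨hKT, hclique.subset (erase_subset v K), fun x hxT => ?_⟩
  obtain ⟨y, hyK, hxy⟩ := hmax x (hTS hxT)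
  have hyv : y ≠ v := by
    rintro rfl
    exact hxy (hadj x hxT).symm
  exact ⟨y, mem_erase.2 ⟨hyv, hyK⟩, hxy⟩

theorem card_filter_mem_erase_subset_maximalCliquesIn_le [DecidableEq V] (hTS : T ⊆ S)
    (hadj : ∀ x ∈ T, G.Adj v x) :
    #{K ∈ maximalCliquesIn G S | v ∈ K ∧ K.erase v ⊆ T} ≤ #(maximalCliquesIn G T) := by
  refine card_le_card_of_injOn (fun K => K.erase v) (fun K hK => ?_)
    ((erase_injOn' v).mono fun K hK => (mem_filter.1 hK).2.1)
  obtain ⟨hK, -, hKT⟩ := mem_filter.1 hK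
  exact erase_mem_maximalCliquesIn hK hKT hTS hadj

theorem card_maximalCliquesIn_le_sum_not_adj [DecidableRel G.Adj] (hu : u ∈ S) :
    #(maximalCliquesIn G S) ≤
      ∑ w ∈ S with ¬ G.Adj u w, #(maximalCliquesIn G {x ∈ S | G.Adj w x}) := by
  classical
  have hcover : maximalCliquesIn G S ⊆ ({w ∈ S | ¬ G.Adj u w} : Finset V).biUnion fun w =>
      {K ∈ maximalCliquesIn G S | w ∈ K ∧ K.erase w ⊆ ({x ∈ S | G.Adj w x} : Finset V)} := by
    intro K hK
    obtain ⟨hKS, -, hmax⟩ := mem_maximalCliquesIn_iff_forall_exists_not_adj.1 hK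
    obtain ⟨w, hwK, huw⟩ := hmax u hu
    have hadj := (mem_iff_forall_erase_adj_of_mem_maximalCliquesIn hK (hKS hwK)).1 hwK
    exact mem_biUnion.2 ⟨w, mem_filter.2 ⟨hKS hwK, huw⟩, mem_filter.2 ⟨hK, hwK, fun y hy =>
      mem_filter.2 ⟨hKS (mem_of_mem_erase hy), hadj y hy⟩⟩⟩
  refine (card_le_card hcover).trans (card_biUnion_le.trans (sum_le_sum fun w _ => ?_))
  exact card_filter_mem_erase_subset_maximalCliquesIn_le (filter_subset _ S) fun x hx =>
    (mem_filter.1 hx).2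

theorem pow_three_le_three_pow (k : ℕ) : k ^ 3 ≤ 3 ^ k := by
  rcases lt_or_ge k 3 with hk | hk
  · interval_cases k <;> norm_num
  · induction k, hk using Nat.le_induction with
    | base => rfl
    | succ k hk ih =>
      calc (k + 1) ^ 3 ≤ 3 * k ^ 3 := by nlinarith [pow_le_pow_left' hk 2]
        _ ≤ 3 * 3 ^ k := by gcongr
        _ = 3 ^ (k + 1) := (pow_succ' 3 k).symm

theorem natCast_le_three_rpow_div_three (k : ℕ) : (k : ℝ) ≤ 3 ^ ((k : ℝ) / 3) := by
  refine le_of_pow_le_pow_left₀ three_ne_zero (by positivity) ?_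
  calc (k : ℝ) ^ 3 ≤ 3 ^ k := mod_cast pow_three_le_three_pow k
    _ = (3 ^ ((k : ℝ) / 3)) ^ 3 := by
      rw [← Real.rpow_mul_natCast zero_le_three, Nat.cast_ofNat,
        div_mul_cancel₀ _ (three_ne_zero' ℝ), Real.rpow_natCast]

/-- The Moon–Moser bound: branching on a vertex with the fewest non-neighbors, `d` say, leaves `d`
neighborhoods of at most `#S - d` vertices each, and `d * 3 ^ ((#S - d) / 3) ≤ 3 ^ (#S / 3)`. -/
theorem card_maximalCliquesIn_le_three_rpow (G : SimpleGraph V) (S : Finset V) :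
    (#(maximalCliquesIn G S) : ℝ) ≤ 3 ^ ((#S : ℝ) / 3) := by
  classical
  induction S using Finset.strongInduction with
  | H S ih =>
  rcases S.eq_empty_or_nonempty with rfl | hS
  · simp [maximalCliquesIn_empty]
  obtain ⟨u, huS, hu⟩ := S.exists_min_image (fun w => #{x ∈ S | ¬ G.Adj w x}) hS
  set d := #{x ∈ S | ¬ G.Adj u x}
  have hbranch : ∀ w ∈ ({w ∈ S | ¬ G.Adj u w} : Finset V),
      (#(maximalCliquesIn G {x ∈ S | G.Adj w x}) : ℝ) ≤ 3 ^ (((#S : ℝ) - d) / 3) := by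
    intro w hw
    have hwS : w ∈ S := (mem_filter.1 hw).1
    have hsmaller : ({x ∈ S | G.Adj w x} : Finset V) ⊂ S :=
      filter_ssubset.2 ⟨w, hwS, G.irrefl⟩
    have hcard : #{x ∈ S | G.Adj w x} + d ≤ #S := by
      rw [← card_filter_add_card_filter_not (s := S) (G.Adj w)]
      exact Nat.add_le_add_left (hu w hwS) _
    refine (ih _ hsmaller).trans ?_
    gcongr
    · norm_num
    · exact le_sub_iff_add_le.2 (mod_cast hcard)
  calc (#(maximalCliquesIn G S) : ℝ)
      ≤ ∑ w ∈ S with ¬ G.Adj u w, (#(maximalCliquesIn G {x ∈ S | G.Adj w x}) : ℝ) :=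
        mod_cast card_maximalCliquesIn_le_sum_not_adj huS
    _ ≤ d * 3 ^ (((#S : ℝ) - d) / 3) := by
        simpa only [nsmul_eq_mul] using sum_le_card_nsmul _ _ _ hbranch
    _ ≤ 3 ^ ((d : ℝ) / 3) * 3 ^ (((#S : ℝ) - d) / 3) := by
        gcongr
        exact natCast_le_three_rpow_div_three d
    _ = 3 ^ ((#S : ℝ) / 3) := by
        rw [← Real.rpow_add three_pos]
        ring_nf

theorem exists_not_adj_of_erase_notMem_maximalCliquesIn [DecidableEq V]
    (hK : K ∈ maximalCliquesIn G S) (herase : K.erase v ∉ maximalCliquesIn G (S.erase v)) :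
    v ∈ K ∧ ∃ u ∈ S.erase v, ¬ G.Adj v u ∧ ∀ y ∈ K.erase v, G.Adj u y := by
  rw [mem_maximalCliquesIn_iff_forall_exists_not_adj] at hK herase
  obtain ⟨hKS, hclique, hmax⟩ := hK
  obtain ⟨u, huS, hu⟩ : ∃ u ∈ S.erase v, ∀ y ∈ K.erase v, G.Adj u y := by
    by_contra! hcon
    exact herase ⟨erase_subset_erase v hKS, hclique.subset (erase_subset v K), hcon⟩
  obtain ⟨y, hyK, huy⟩ := hmax u (mem_of_mem_erase huS)
  obtain rfl : y = v := by
    by_contra hyv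
    exact huy (hu y (mem_erase.2 ⟨hyv, hyK⟩))
  exact ⟨hyK, u, huS, fun hadj => huy hadj.symm, hu⟩

theorem card_filter_erase_notMem_maximalCliquesIn_le [DecidableEq V] (G : SimpleGraph V)
    [DecidableRel G.Adj] (S : Finset V) (v : V) :
    #{K ∈ maximalCliquesIn G S | K.erase v ∉ maximalCliquesIn G (S.erase v)} ≤
      ∑ u ∈ S.erase v with ¬ G.Adj v u,
        #(maximalCliquesIn G {x ∈ S | G.Adj v x ∧ G.Adj u x}) := by
  have hcover : {K ∈ maximalCliquesIn G S | K.erase v ∉ maximalCliquesIn G (S.erase v)} ⊆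
      ({u ∈ S.erase v | ¬ G.Adj v u} : Finset V).biUnion fun u =>
        {K ∈ maximalCliquesIn G S |
          v ∈ K ∧ K.erase v ⊆ ({x ∈ S | G.Adj v x ∧ G.Adj u x} : Finset V)} := by
    intro K hK
    obtain ⟨hK, herase⟩ := mem_filter.1 hK
    obtain ⟨hvK, u, huS, hvu, hu⟩ := exists_not_adj_of_erase_notMem_maximalCliquesIn hK herase
    have hKS : K ⊆ S := (mem_maximalCliquesIn.1 hK).prop.1
    have hv := (mem_iff_forall_erase_adj_of_mem_maximalCliquesIn hK (hKS hvK)).1 hvK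
    exact mem_biUnion.2 ⟨u, mem_filter.2 ⟨huS, hvu⟩, mem_filter.2 ⟨hK, hvK, fun y hy =>
      mem_filter.2 ⟨hKS (mem_of_mem_erase hy), hv y hy, hu y hy⟩⟩⟩
  refine (card_le_card hcover).trans (card_biUnion_le.trans (sum_le_sum fun u _ => ?_))
  exact card_filter_mem_erase_subset_maximalCliquesIn_le (filter_subset _ S) fun x hx =>
    (mem_filter.1 hx).2.1

theorem card_maximalCliquesIn_le_erase_add_sum [DecidableEq V] (G : SimpleGraph V)
    [DecidableRel G.Adj] (hv : v ∈ S) :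
    #(maximalCliquesIn G S) ≤ #(maximalCliquesIn G (S.erase v)) +
      ∑ u ∈ S.erase v with ¬ G.Adj v u,
        #(maximalCliquesIn G {x ∈ S | G.Adj v x ∧ G.Adj u x}) := by
  have hstay : #{K ∈ maximalCliquesIn G S | K.erase v ∈ maximalCliquesIn G (S.erase v)} ≤
      #(maximalCliquesIn G (S.erase v)) :=
    card_le_card_of_injOn (fun K => K.erase v) (fun K hK => (mem_filter.1 hK).2)
      ((erase_injOn_maximalCliquesIn hv).mono (filter_subset _ _))
  rw [← card_filter_add_card_filter_not (s := maximalCliquesIn G S)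
    (fun K => K.erase v ∈ maximalCliquesIn G (S.erase v))]
  exact add_le_add hstay (card_filter_erase_notMem_maximalCliquesIn_le G S v)

theorem card_common_neighbors_lt_of_not_badPairIn [DecidableRel G.Adj] (hv : v ∈ S) (hw : w ∈ S)
    (hvw : v ≠ w) (hadj : ¬ G.Adj v w) (hgood : ¬ BadPairIn c G S v w) :
    #{x ∈ S | G.Adj v x ∧ G.Adj w x} < c := by
  have hcommon : (({x ∈ S | G.Adj v x ∧ G.Adj w x} : Finset V) : Set V) =
      G.neighborSet v ∩ G.neighborSet w ∩ S := by
    ext x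
    simp only [mem_coe, mem_filter, Set.mem_inter_iff, SimpleGraph.mem_neighborSet, and_comm]
  by_contra! hle
  exact hgood ⟨hv, hw, hvw, hadj, by rwa [← hcommon, Set.ncard_coe_finset]⟩

theorem card_maximalCliquesIn_common_neighbors_le [DecidableRel G.Adj] (hv : v ∈ S) (hw : w ∈ S)
    (hvw : v ≠ w) (hadj : ¬ G.Adj v w) (hgood : ¬ BadPairIn c G S v w) :
    (#(maximalCliquesIn G {x ∈ S | G.Adj v x ∧ G.Adj w x}) : ℝ) ≤ 3 ^ (((c : ℝ) - 1) / 3) := by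
  have hlt := card_common_neighbors_lt_of_not_badPairIn hv hw hvw hadj hgood
  refine (card_maximalCliquesIn_le_three_rpow G _).trans ?_
  gcongr
  · norm_num
  · exact le_sub_iff_add_le.2 (mod_cast hlt)

theorem card_maximalCliquesIn_le_of_forall_exists_not_badPairIn
    (hgood : ∀ T ⊆ S, T.Nonempty → ∃ v ∈ T, ∀ w, ¬ BadPairIn c G T v w) :
    (#(maximalCliquesIn G S) : ℝ) ≤ 1 + 3 ^ (((c : ℝ) - 1) / 3) * (#S).choose 2 := by
  classical
  induction S using Finset.strongInduction with
  | H S ih =>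
  rcases S.eq_empty_or_nonempty with rfl | hS
  · simp [maximalCliquesIn_empty]
  obtain ⟨v, hv, hvgood⟩ := hgood S Subset.rfl hS
  set B : ℝ := 3 ^ (((c : ℝ) - 1) / 3)
  have hdelete := ih (S.erase v) (erase_ssubset hv) fun T hT =>
    hgood T (hT.trans (erase_subset v S))
  have hcommon : ∀ u ∈ ({u ∈ S.erase v | ¬ G.Adj v u} : Finset V),
      (#(maximalCliquesIn G {x ∈ S | G.Adj v x ∧ G.Adj u x}) : ℝ) ≤ B := by
    intro u hu
    obtain ⟨hu, hvu⟩ := mem_filter.1 hu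
    exact card_maximalCliquesIn_common_neighbors_le hv (mem_of_mem_erase hu)
      (ne_of_mem_erase hu).symm hvu (hvgood u)
  calc (#(maximalCliquesIn G S) : ℝ)
      ≤ #(maximalCliquesIn G (S.erase v)) + ∑ u ∈ S.erase v with ¬ G.Adj v u,
          (#(maximalCliquesIn G {x ∈ S | G.Adj v x ∧ G.Adj u x}) : ℝ) :=
        mod_cast card_maximalCliquesIn_le_erase_add_sum G hv
    _ ≤ #(maximalCliquesIn G (S.erase v)) + #{u ∈ S.erase v | ¬ G.Adj v u} * B := by
        grw [sum_le_card_nsmul _ _ _ hcommon, nsmul_eq_mul]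
    _ ≤ (1 + B * (#(S.erase v)).choose 2) + #(S.erase v) * B := by
        gcongr
        exact filter_subset _ _
    _ = 1 + B * (#S).choose 2 := by
        rw [← card_erase_add_one hv, Nat.choose_succ_succ', Nat.choose_one_right]
        push_cast
        ring

theorem isMaxClique_coe_iff [Fintype V] : IsMaxClique G K ↔ K ∈ maximalCliquesIn G univ := by
  rw [mem_maximalCliquesIn]
  constructor
  · rintro ⟨hclique, hmax⟩
    exact ⟨⟨subset_univ K, hclique⟩, fun L hL hKL =>
      coe_subset.1 (hmax L hL.2 (coe_subset.2 hKL)).ge⟩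
  · refine fun hK => ⟨hK.prop.2, fun L hL hKL => ?_⟩
    lift L to Finset V using L.toFinite
    exact congrArg _ (hK.eq_of_le ⟨subset_univ L, hL⟩ (coe_subset.1 hKL))

theorem ncard_isMaxClique_eq_card_maximalCliquesIn [Fintype V] (G : SimpleGraph V) :
    {K : Set V | IsMaxClique G K}.ncard = #(maximalCliquesIn G univ) := by
  have himage : {K : Set V | IsMaxClique G K} =
      (fun K : Finset V => (K : Set V)) '' maximalCliquesIn G univ := by
    ext K
    lift K to Finset V using K.toFinite
    simp [isMaxClique_coe_iff]
  rw [himage, Set.ncard_image_of_injective _ coe_injective, Set.ncard_coe_finset]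

end

theorem BadPairIn.mono {V : Type*} {c : ℕ} {G : SimpleGraph V} {S T : Set V} {u w : V}
    (hT : T.Finite) (hST : S ⊆ T) (h : BadPairIn c G S u w) : BadPairIn c G T u w := by
  obtain ⟨hu, hw, huw, hadj, hcard⟩ := h
  refine ⟨hST hu, hST hw, huw, hadj, hcard.trans (Set.ncard_le_ncard ?_ (hT.inter_of_right _))⟩
  exact Set.inter_subset_inter_right _ hST

theorem WeaklyCClosed.exists_forall_not_badPairIn {V : Type*} [Fintype V] {c : ℕ}
    {G : SimpleGraph V} (hG : WeaklyCClosed c G) {S : Set V} (hS : S.Nonempty) :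
    ∃ v ∈ S, ∀ w, ¬ BadPairIn c G S v w := by
  obtain ⟨e, he⟩ := hG
  obtain ⟨v, hv, hfirst⟩ := S.exists_min_image e.symm S.toFinite hS
  have hlater : S ⊆ {x | ∃ j, e.symm v ≤ j ∧ e j = x} := fun x hx =>
    ⟨e.symm x, hfirst x hx, e.apply_symm_apply x⟩
  refine ⟨v, hv, fun w hbad => he (e.symm v) w ?_⟩
  rw [e.apply_symm_apply]
  exact hbad.mono (Set.toFinite _) hlater

/-- Every weakly `c`-closed graph on `n` vertices has at most
`3 ^ ((c - 1)/3) * n ^ 2` maximal cliques. -/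
theorem weaklyCClosed_card_maxCliques_le {V : Type*} [Fintype V] {c n : ℕ}
    (hc : 0 < c) (hn : 0 < n) (G : SimpleGraph V)
    (hcard : Fintype.card V = n) (hG : WeaklyCClosed c G) :
    ({K : Set V | IsMaxClique G K}.ncard : ℝ) ≤
      3 ^ (((c : ℝ) - 1) / 3) * (n : ℝ) ^ 2 := by
  have hB : (1 : ℝ) ≤ 3 ^ (((c : ℝ) - 1) / 3) :=
    Real.one_le_rpow (by norm_num) (div_nonneg (sub_nonneg.2 (mod_cast hc)) zero_le_three)
  have hchoose : (1 : ℝ) + n.choose 2 ≤ (n : ℝ) ^ 2 := by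
    have hn1 : (1 : ℝ) ≤ n := mod_cast hn
    rw [Nat.cast_choose_two]
    nlinarith
  calc ({K : Set V | IsMaxClique G K}.ncard : ℝ)
      = (maximalCliquesIn G Finset.univ).card := by
        rw [ncard_isMaxClique_eq_card_maximalCliquesIn]
    _ ≤ 1 + 3 ^ (((c : ℝ) - 1) / 3) * n.choose 2 := by
        rw [← hcard, ← Finset.card_univ]
        exact card_maximalCliquesIn_le_of_forall_exists_not_badPairIn fun _ _ hT =>
          hG.exists_forall_not_badPairIn hT
    _ ≤ 3 ^ (((c : ℝ) - 1) / 3) * (1 + n.choose 2) := by linarith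
    _ ≤ 3 ^ (((c : ℝ) - 1) / 3) * (n : ℝ) ^ 2 := by gcongr
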